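/- Let n ≥ 2 be an integer, let ρ : ℝ³ → ℝ be smooth with compact support, let w(x) = x₃^{n+1}·(1,1,0), and let v = ∇×(ρw). Then v is smooth, compactly supported, divergence free, and every partial derivative of v of order at most n−1 vanishes on Γ: for every multi-index α with |α| ≤ n−1 and every component j, ∂^α v_j(x₁,x₂,0) = 0 for all (x₁,x₂) ∈ ℝ². In particular v satisfies the slip boundary conditions v₃ = 0 and (∇×v)₁ = (∇×v)₂ = 0 on Γ. -/

import Mathlib

/-! The field `ρw` is divisible by `x₃ ^ (n + 1)` in the ring of smooth functions, and a partial
derivative lowers the exponent of such a power of `x₃` by at most one (`VanishesToOrder.pd`).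
So the components of `v = ∇×(ρw)` are divisible by `x₃ ^ n`, a derivative of `v` of order at most
`n - 1` keeps at least one factor `x₃`, and so do the components of `∇×v` because `n ≥ 2`; all of
them vanish on `Γ`. That `v` is divergence free is the identity `∇·(∇×F) = 0` (`div3_curl3`), the
symmetry of second derivatives. -/

noncomputable section

open Filter Set

/-- The reflection `x ↦ (x₁, x₂, −x₃)` of a point of `ℝ³`. -/
def refl3 (x : Fin 3 → ℝ) : Fin 3 → ℝ := ![x 0, x 1, -(x 2)]

/-- The operator `𝒯` acting on scalar fields: `(𝒯p)(x) = p(x̄)`. -/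
def Tscal (p : (Fin 3 → ℝ) → ℝ) : (Fin 3 → ℝ) → ℝ := fun x => p (refl3 x)

/-- The operator `𝒯` acting on vector fields:
`(𝒯v)(x) = (v₁(x̄), v₂(x̄), −v₃(x̄))`. -/
def Tvec (v : (Fin 3 → ℝ) → (Fin 3 → ℝ)) : (Fin 3 → ℝ) → (Fin 3 → ℝ) :=
  fun x => ![v (refl3 x) 0, v (refl3 x) 1, -(v (refl3 x) 2)]

/-- Partial derivative in the `i`-th coordinate direction. -/
def pd (i : Fin 3) (f : (Fin 3 → ℝ) → ℝ) : (Fin 3 → ℝ) → ℝ :=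
  fun x => fderiv ℝ f x (Pi.single i 1)

/-- Divergence `∇·v = ∂₁v₁ + ∂₂v₂ + ∂₃v₃`. -/
def div3 (v : (Fin 3 → ℝ) → (Fin 3 → ℝ)) : (Fin 3 → ℝ) → ℝ :=
  fun x => pd 0 (fun y => v y 0) x + pd 1 (fun y => v y 1) x + pd 2 (fun y => v y 2) x

/-- Curl `∇×v = (∂₂v₃−∂₃v₂, ∂₃v₁−∂₁v₃, ∂₁v₂−∂₂v₁)`. -/
def curl3 (v : (Fin 3 → ℝ) → (Fin 3 → ℝ)) : (Fin 3 → ℝ) → (Fin 3 → ℝ) :=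
  fun x => ![pd 1 (fun y => v y 2) x - pd 2 (fun y => v y 1) x,
             pd 2 (fun y => v y 0) x - pd 0 (fun y => v y 2) x,
             pd 0 (fun y => v y 1) x - pd 1 (fun y => v y 0) x]

/-- Scalar Laplacian `Δf = ∂₁²f + ∂₂²f + ∂₃²f`. -/
def lap3 (f : (Fin 3 → ℝ) → ℝ) : (Fin 3 → ℝ) → ℝ :=
  fun x => pd 0 (pd 0 f) x + pd 1 (pd 1 f) x + pd 2 (pd 2 f) x

/-- `j`-th component of the convective term `(v·∇)v`. -/
def conv3 (v : (Fin 3 → ℝ) → (Fin 3 → ℝ)) (j : Fin 3) : (Fin 3 → ℝ) → ℝ :=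
  fun x => ∑ i : Fin 3, v x i * pd i (fun y => v y j) x

/-- Iterated normal derivative `∂₃^k`. -/
def pd3pow (k : ℕ) (f : (Fin 3 → ℝ) → ℝ) : (Fin 3 → ℝ) → ℝ := (pd 2)^[k] f

/-- Multi-index partial derivative `∂^α = ∂₁^{α₀} ∂₂^{α₁} ∂₃^{α₂}`. -/
def pdMulti (α : Fin 3 → ℕ) (f : (Fin 3 → ℝ) → ℝ) : (Fin 3 → ℝ) → ℝ :=
  (pd 0)^[α 0] ((pd 1)^[α 1] ((pd 2)^[α 2] f))

/-- Mirror extension `𝒯̃ã` of a field on the (closed) upper half-space: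
it equals `ã` for `x₃ ≥ 0` and `𝒯ã` for `x₃ < 0`. -/
def mirrorExt (a : (Fin 3 → ℝ) → (Fin 3 → ℝ)) : (Fin 3 → ℝ) → (Fin 3 → ℝ) :=
  fun x => if 0 ≤ x 2 then a x else Tvec a x

/-- Symmetric gradient `(𝒟u)_{ij} = (∂ᵢu_j + ∂_ju_i)/2`. -/
def Dsym (u : (Fin 3 → ℝ) → (Fin 3 → ℝ)) (x : Fin 3 → ℝ) : Matrix (Fin 3) (Fin 3) ℝ :=
  fun i j => (pd i (fun y => u y j) x + pd j (fun y => u y i) x) / 2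

/-- Frobenius norm of a `3×3` matrix. -/
def frob (D : Matrix (Fin 3) (Fin 3) ℝ) : ℝ :=
  Real.sqrt (∑ i : Fin 3, ∑ j : Fin 3, (D i j) ^ 2)

/-- `f` is divisible by `x₃ ^ k` in the ring of smooth functions on `ℝ³`; for smooth `f` this
says that `f` vanishes to order `k` on the plane `x₃ = 0`. -/
def VanishesToOrder (k : ℕ) (f : (Fin 3 → ℝ) → ℝ) : Prop :=
  ∃ g : (Fin 3 → ℝ) → ℝ, ContDiff ℝ (⊤ : ℕ∞) g ∧ f = fun x => x 2 ^ k * g x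

lemma contDiff_pd (i : Fin 3) {f : (Fin 3 → ℝ) → ℝ} (hf : ContDiff ℝ (⊤ : ℕ∞) f) :
    ContDiff ℝ (⊤ : ℕ∞) (pd i f) :=
  (hf.fderiv_right (m := (⊤ : ℕ∞)) (by simp)).clm_apply contDiff_const

lemma hasCompactSupport_pd (i : Fin 3) {f : (Fin 3 → ℝ) → ℝ} (hf : HasCompactSupport f) :
    HasCompactSupport (pd i f) :=
  hf.fderiv_apply ℝ _

lemma pd_sub (i : Fin 3) {f g : (Fin 3 → ℝ) → ℝ} (hf : ContDiff ℝ (⊤ : ℕ∞) f)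
    (hg : ContDiff ℝ (⊤ : ℕ∞) g) (x : Fin 3 → ℝ) :
    pd i (fun y => f y - g y) x = pd i f x - pd i g x := by
  have h1 : DifferentiableAt ℝ f x := hf.differentiable (by simp) x
  have h2 : DifferentiableAt ℝ g x := hg.differentiable (by simp) x
  simp only [pd]
  rw [fderiv_fun_sub h1 h2]
  rfl

lemma pd_comm (i j : Fin 3) {f : (Fin 3 → ℝ) → ℝ} (hf : ContDiff ℝ (⊤ : ℕ∞) f)
    (x : Fin 3 → ℝ) : pd i (pd j f) x = pd j (pd i f) x := by
  have hd : DifferentiableAt ℝ (fderiv ℝ f) x :=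
    (hf.fderiv_right (m := (⊤ : ℕ∞)) (by simp)).differentiable (by simp) x
  have key : ∀ a b : Fin 3, pd a (pd b f) x =
      fderiv ℝ (fderiv ℝ f) x (Pi.single a 1) (Pi.single b 1) := by
    intro a b
    unfold pd
    rw [fderiv_clm_apply hd (differentiableAt_const _)]
    simp
  rw [key, key]
  have h2 : ContDiff ℝ 2 f := hf.of_le (WithTop.coe_le_coe.2 le_top)
  exact (h2.contDiffAt.isSymmSndFDerivAt (by simp)) _ _

lemma contDiff_curl3 {F : (Fin 3 → ℝ) → (Fin 3 → ℝ)}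
    (hF : ∀ i, ContDiff ℝ (⊤ : ℕ∞) (fun y => F y i)) : ContDiff ℝ (⊤ : ℕ∞) (curl3 F) := by
  rw [contDiff_pi]
  intro j
  fin_cases j
  · exact (contDiff_pd 1 (hF 2)).sub (contDiff_pd 2 (hF 1))
  · exact (contDiff_pd 2 (hF 0)).sub (contDiff_pd 0 (hF 2))
  · exact (contDiff_pd 0 (hF 1)).sub (contDiff_pd 1 (hF 0))

lemma hasCompactSupport_curl3 {F : (Fin 3 → ℝ) → (Fin 3 → ℝ)}
    (hF : ∀ i, HasCompactSupport (fun y => F y i)) : HasCompactSupport (curl3 F) := by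
  have h : ∀ a b, pd a (fun y => F y b) =ᶠ[coclosedCompact (Fin 3 → ℝ)] 0 := fun a b =>
    hasCompactSupport_iff_eventuallyEq.1 (hasCompactSupport_pd a (hF b))
  rw [hasCompactSupport_iff_eventuallyEq]
  filter_upwards [h 1 2, h 2 1, h 2 0, h 0 2, h 0 1, h 1 0] with x h1 h2 h3 h4 h5 h6
  funext j
  fin_cases j <;> simp [curl3, h1, h2, h3, h4, h5, h6]

/-- The divergence of a curl vanishes. -/
lemma div3_curl3 {F : (Fin 3 → ℝ) → (Fin 3 → ℝ)}
    (hF : ∀ i, ContDiff ℝ (⊤ : ℕ∞) (fun y => F y i)) (x : Fin 3 → ℝ) :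
    div3 (curl3 F) x = 0 := by
  have e0 := pd_sub 0 (contDiff_pd 1 (hF 2)) (contDiff_pd 2 (hF 1)) x
  have e1 := pd_sub 1 (contDiff_pd 2 (hF 0)) (contDiff_pd 0 (hF 2)) x
  have e2 := pd_sub 2 (contDiff_pd 0 (hF 1)) (contDiff_pd 1 (hF 0)) x
  have c0 := pd_comm 0 1 (hF 2) x
  have c1 := pd_comm 0 2 (hF 1) x
  have c2 := pd_comm 1 2 (hF 0) x
  change pd 0 (fun y => pd 1 (fun y => F y 2) y - pd 2 (fun y => F y 1) y) x
    + pd 1 (fun y => pd 2 (fun y => F y 0) y - pd 0 (fun y => F y 2) y) x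
    + pd 2 (fun y => pd 0 (fun y => F y 1) y - pd 1 (fun y => F y 0) y) x = 0
  linarith

lemma VanishesToOrder.contDiff {k : ℕ} {f : (Fin 3 → ℝ) → ℝ} (hf : VanishesToOrder k f) :
    ContDiff ℝ (⊤ : ℕ∞) f := by
  obtain ⟨g, hg, rfl⟩ := hf
  fun_prop

lemma VanishesToOrder.sub {k : ℕ} {f g : (Fin 3 → ℝ) → ℝ} (hf : VanishesToOrder k f)
    (hg : VanishesToOrder k g) : VanishesToOrder k (fun x => f x - g x) := by
  obtain ⟨a, ha, rfl⟩ := hf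
  obtain ⟨b, hb, rfl⟩ := hg
  exact ⟨fun x => a x - b x, ha.sub hb, by funext x; ring⟩

lemma VanishesToOrder.eq_zero {k : ℕ} {f : (Fin 3 → ℝ) → ℝ} (hf : VanishesToOrder k f)
    (hk : k ≠ 0) (x₁ x₂ : ℝ) : f ![x₁, x₂, 0] = 0 := by
  obtain ⟨g, -, rfl⟩ := hf
  simp [hk]

/-- A partial derivative loses at most one factor `x₃`:
`∂ᵢ(x₃ ^ (k + 1) g) = x₃ ^ k ((k + 1) δᵢ₃ g + x₃ ∂ᵢ g)`. -/
lemma VanishesToOrder.pd {k : ℕ} {f : (Fin 3 → ℝ) → ℝ} (hf : VanishesToOrder (k + 1) f)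
    (i : Fin 3) : VanishesToOrder k (pd i f) := by
  obtain ⟨g, hg, rfl⟩ := hf
  refine ⟨fun x => (k + 1) * (Pi.single i (1 : ℝ) : Fin 3 → ℝ) 2 * g x + x 2 * _root_.pd i g x,
    ?_, ?_⟩
  · have := contDiff_pd i hg
    fun_prop
  · funext x
    have h1 : HasFDerivAt (fun y : Fin 3 → ℝ => y 2)
      (ContinuousLinearMap.proj (R := ℝ) (φ := fun _ : Fin 3 => ℝ) 2) x := hasFDerivAt_apply 2 x
    have h2 : HasFDerivAt g (fderiv ℝ g x) x := (hg.differentiable (by simp) x).hasFDerivAt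
    have h3 := (h1.pow (k + 1)).mul h2
    simp only [_root_.pd]
    erw [h3.fderiv]
    simp
    ring

lemma VanishesToOrder.iterate_pd (i : Fin 3) (m : ℕ) {k : ℕ} {f : (Fin 3 → ℝ) → ℝ}
    (hf : VanishesToOrder (k + m) f) : VanishesToOrder k ((_root_.pd i)^[m] f) := by
  induction m generalizing f with
  | zero => exact hf
  | succ m ih => exact ih (VanishesToOrder.pd hf i)

lemma VanishesToOrder.curl3 {k : ℕ} {F : (Fin 3 → ℝ) → (Fin 3 → ℝ)}
    (hF : ∀ i, VanishesToOrder (k + 1) (fun y => F y i)) (j : Fin 3) :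
    VanishesToOrder k (fun y => curl3 F y j) := by
  fin_cases j
  · exact ((hF 2).pd 1).sub ((hF 1).pd 2)
  · exact ((hF 0).pd 2).sub ((hF 2).pd 0)
  · exact ((hF 1).pd 0).sub ((hF 0).pd 1)

/-- for `n ≥ 2`, `ρ` smooth with compact support,
`w(x) = x₃^{n+1}(1,1,0)` and `v = ∇×(ρw)`: `v` is smooth, compactly supported,
divergence free, every partial derivative of `v` of order `≤ n−1` vanishes on `Γ`,
and in particular `v` satisfies the slip boundary conditions
`v₃ = 0`, `(∇×v)₁ = (∇×v)₂ = 0` on `Γ`. -/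
theorem independence_example_vanishing (n : ℕ) (hn : 2 ≤ n)
    (ρ : (Fin 3 → ℝ) → ℝ) (hρ : ContDiff ℝ (⊤ : ℕ∞) ρ) (hρc : HasCompactSupport ρ)
    (v : (Fin 3 → ℝ) → (Fin 3 → ℝ))
    (hv : v = curl3 (fun x => fun i => ρ x * (x 2 ^ (n + 1) * ![(1 : ℝ), 1, 0] i))) :
    ContDiff ℝ (⊤ : ℕ∞) v ∧ HasCompactSupport v ∧
    (∀ x : Fin 3 → ℝ, div3 v x = 0) ∧
    (∀ α : Fin 3 → ℕ, α 0 + α 1 + α 2 ≤ n - 1 → ∀ j : Fin 3, ∀ x₁ x₂ : ℝ,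
      pdMulti α (fun y => v y j) ![x₁, x₂, 0] = 0) ∧
    (∀ x₁ x₂ : ℝ,
      v ![x₁, x₂, 0] 2 = 0 ∧
      curl3 v ![x₁, x₂, 0] 0 = 0 ∧
      curl3 v ![x₁, x₂, 0] 1 = 0) := by
  subst hv
  have hW : ∀ i, VanishesToOrder (n + 1)
      (fun x : Fin 3 → ℝ => ρ x * (x 2 ^ (n + 1) * ![(1 : ℝ), 1, 0] i)) := fun i =>
    ⟨fun x => ρ x * ![(1 : ℝ), 1, 0] i, hρ.mul contDiff_const, by funext x; ring⟩
  have hV := VanishesToOrder.curl3 (k := n) hW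
  refine ⟨contDiff_curl3 fun i => (hW i).contDiff,
    hasCompactSupport_curl3 fun i => hρc.mul_right,
    div3_curl3 fun i => (hW i).contDiff, ?_, ?_⟩
  · intro α hα j x₁ x₂
    obtain ⟨m, hm⟩ : ∃ m, n = m + 1 + α 0 + α 1 + α 2 := ⟨n - 1 - (α 0 + α 1 + α 2), by omega⟩
    have h := hV j
    -- only the order is rewritten: `n` also occurs in the field itself
    have h' := (((congrArg (VanishesToOrder · _) hm).mp h).iterate_pd 2 (α 2)
      |>.iterate_pd 1 (α 1)).iterate_pd 0 (α 0)
    exact h'.eq_zero m.succ_ne_zero x₁ x₂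
  · intro x₁ x₂
    have hC := VanishesToOrder.curl3 (k := n - 1) fun j => by
      rw [Nat.sub_add_cancel (by omega : 1 ≤ n)]; exact hV j
    exact ⟨(hV 2).eq_zero (by omega) x₁ x₂, (hC 0).eq_zero (by omega) x₁ x₂,
      (hC 1).eq_zero (by omega) x₁ x₂⟩
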